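/- Let f ∈ ℝ[x₁,…,xₙ] with deg f ≤ 2d. Then ρ_d(f) = min{ Σ_{i=0}^n λᵢ : λ = (λ₀,…,λₙ) ∈ ℝ₊^{n+1}, f + λ₀ + Σ_{i=1}^n λᵢ xᵢ^{2d} ∈ Σ[x]_d }, and this minimum is attained by some nonnegative λ* ∈ ℝ₊^{n+1}. -/

import Mathlib

open MvPolynomial Finset

/-- The ℓ₁-norm of the coefficient vector of a polynomial. -/
noncomputable def l1Norm {n : ℕ} (f : MvPolynomial (Fin n) ℝ) : ℝ :=
  ∑ α ∈ f.support, |f.coeff α|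

/-- `IsSOS d g` : `g` is a sum of squares of polynomials of degree at most `d`
(i.e. `g ∈ Σ[x]_d`). -/
def IsSOS {n : ℕ} (d : ℕ) (g : MvPolynomial (Fin n) ℝ) : Prop :=
  ∃ (k : ℕ) (h : Fin k → MvPolynomial (Fin n) ℝ),
    (∀ i, (h i).totalDegree ≤ d) ∧ g = ∑ i, (h i) ^ 2

/-- `rho d f = inf {‖f - g‖₁ : g ∈ Σ[x]_d}`. -/
noncomputable def rho {n : ℕ} (d : ℕ) (f : MvPolynomial (Fin n) ℝ) : ℝ :=
  sInf {r : ℝ | ∃ g, IsSOS d g ∧ r = l1Norm (f - g)}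

/-! Fix `α` with `|α| ≤ 2d` and write `α = β + γ` with `|β|, |γ| ≤ d`. Completing the square,
`c x^α = |c|/2 ((x^β ± x^γ)² - x^{2β} - x^{2γ})`, and the weighted AM–GM inequality, whose defect
is a sum of squares, absorbs each `-x^{2β}` into a perturbation `λ₀ + ∑ᵢ λᵢ xᵢ^{2d}` of total
weight `1`. Hence `c x^α` becomes a sum of squares after a perturbation of weight `|c|`.

Applied to the terms of `f - g` with `g ∈ Σ[x]_d`, this yields an admissible perturbation of `f` of
weight `‖f - g‖₁`; conversely the `ℓ₁`-norm of an admissible perturbation is its weight. So the two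
infima agree. The second one is attained because the weight is coercive on `λ ≥ 0` and the cone
`Σ[x]_d` is closed: it is the image of a quadratic map vanishing only at `0`, which is proper. -/

open Filter Topology

section HomogeneousMap

variable {E F : Type*} [NormedAddCommGroup E] [NormedSpace ℝ E] [ProperSpace E]
  [AddCommGroup F] [Module ℝ F] [TopologicalSpace F] [T2Space F] [ContinuousSMul ℝ F]

-- Along an ultrafilter escaping to infinity on which `φ` converges, the normalised points
-- `‖x‖⁻¹ • x` would cluster at a zero of `φ` on the unit sphere.
lemma isProperMap_of_homogeneous {φ : E → F} {k : ℕ} (hk : k ≠ 0) (hφ : Continuous φ)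
    (hsmul : ∀ (c : ℝ) x, φ (c • x) = c ^ k • φ x) (hzero : ∀ x, φ x = 0 → x = 0) :
    IsProperMap φ := by
  refine isProperMap_iff_ultrafilter_of_t2.mpr ⟨hφ, fun 𝒰 y hy => ?_⟩
  by_cases hbdd : Disjoint (𝒰 : Filter E) (cocompact E)
  · obtain ⟨K, hK𝒰, hK⟩ := (disjoint_cocompact_right _).mp hbdd
    obtain ⟨x, -, hx⟩ := isCompact_iff_ultrafilter_le_nhds.mp hK 𝒰 (le_principal_iff.mpr hK𝒰)
    exact ⟨x, hx⟩
  exfalso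
  have hnorm : Tendsto (fun x : E => ‖x‖) 𝒰 atTop :=
    (tendsto_norm_cocompact_atTop (E := E)).mono_left
      (not_not.mp (mt Ultrafilter.disjoint_iff_not_le.mpr hbdd))
  have hsphere : ∀ᶠ x in (𝒰 : Filter E), ‖x‖⁻¹ • x ∈ Metric.sphere (0 : E) 1 := by
    filter_upwards [hnorm.eventually_gt_atTop 0] with x hx
    simp [norm_smul, hx.ne']
  obtain ⟨z, hz, hlim⟩ := isCompact_iff_ultrafilter_le_nhds.mp (isCompact_sphere (0 : E) 1)
    (𝒰.map fun x => ‖x‖⁻¹ • x) (le_principal_iff.mpr hsphere)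
  have hφz : Tendsto (fun x => φ (‖x‖⁻¹ • x)) 𝒰 (𝓝 (φ z)) := (hφ.tendsto z).comp hlim
  have hφ0 : Tendsto (fun x => φ (‖x‖⁻¹ • x)) 𝒰 (𝓝 0) := by
    simpa [hsmul, hk] using ((tendsto_inv_atTop_zero.comp hnorm).pow k).smul hy
  have hz0 : z = 0 := hzero z (tendsto_nhds_unique hφz hφ0)
  simp [hz0] at hz

end HomogeneousMap

section L1Norm

variable {n : ℕ}

lemma l1Norm_eq_sum_of_support_subset {p : MvPolynomial (Fin n) ℝ} {s : Finset (Fin n →₀ ℕ)}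
    (hs : p.support ⊆ s) : l1Norm p = ∑ α ∈ s, |p.coeff α| :=
  Finset.sum_subset hs fun α _ hα => by rw [notMem_support_iff.mp hα, abs_zero]

lemma l1Norm_nonneg (p : MvPolynomial (Fin n) ℝ) : 0 ≤ l1Norm p :=
  Finset.sum_nonneg fun _ _ => abs_nonneg _

lemma l1Norm_neg (p : MvPolynomial (Fin n) ℝ) : l1Norm (-p) = l1Norm p := by
  simp [l1Norm]

lemma l1Norm_smul (c : ℝ) (p : MvPolynomial (Fin n) ℝ) : l1Norm (c • p) = |c| * l1Norm p := by
  rw [l1Norm_eq_sum_of_support_subset support_smul]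
  simp [l1Norm, abs_mul, Finset.mul_sum]

lemma l1Norm_monomial (α : Fin n →₀ ℕ) (c : ℝ) : l1Norm (monomial α c) = |c| := by
  rw [l1Norm_eq_sum_of_support_subset support_monomial_subset]
  simp

lemma l1Norm_add_le (p q : MvPolynomial (Fin n) ℝ) : l1Norm (p + q) ≤ l1Norm p + l1Norm q := by
  classical
  rw [l1Norm_eq_sum_of_support_subset support_add,
    l1Norm_eq_sum_of_support_subset (p := p) subset_union_left,
    l1Norm_eq_sum_of_support_subset (p := q) subset_union_right, ← Finset.sum_add_distrib]
  gcongr with α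
  rw [coeff_add]
  exact abs_add_le _ _

lemma l1Norm_sum_le {ι : Type*} (s : Finset ι) (p : ι → MvPolynomial (Fin n) ℝ) :
    l1Norm (∑ i ∈ s, p i) ≤ ∑ i ∈ s, l1Norm (p i) :=
  Finset.le_sum_of_subadditive l1Norm (by simp [l1Norm]) l1Norm_add_le s p

end L1Norm

section SosCone

variable {n d e : ℕ} {p q : MvPolynomial (Fin n) ℝ}

lemma IsSOS.zero : IsSOS d (0 : MvPolynomial (Fin n) ℝ) :=
  ⟨0, Fin.elim0, fun i => i.elim0, by simp⟩

lemma IsSOS.sq (hp : p.totalDegree ≤ d) : IsSOS d (p ^ 2) :=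
  ⟨1, fun _ => p, fun _ => hp, by simp⟩

lemma IsSOS.add (hp : IsSOS d p) (hq : IsSOS d q) : IsSOS d (p + q) := by
  obtain ⟨k, g, hg, rfl⟩ := hp
  obtain ⟨l, h, hh, rfl⟩ := hq
  refine ⟨k + l, Fin.append g h, fun i => ?_, by simp [Fin.sum_univ_add]⟩
  refine Fin.addCases (fun i => ?_) (fun i => ?_) i <;> simp [hg, hh]

lemma IsSOS.sum {ι : Type*} {s : Finset ι} {p : ι → MvPolynomial (Fin n) ℝ}
    (h : ∀ i ∈ s, IsSOS d (p i)) : IsSOS d (∑ i ∈ s, p i) :=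
  Finset.sum_induction p (IsSOS d) (fun _ _ => IsSOS.add) IsSOS.zero h

lemma IsSOS.sq_mul (hq : q.totalDegree ≤ e) (hp : IsSOS d p) : IsSOS (d + e) (q ^ 2 * p) := by
  obtain ⟨k, g, hg, rfl⟩ := hp
  refine ⟨k, fun i => g i * q, fun i => (totalDegree_mul _ _).trans (add_le_add (hg i) hq), ?_⟩
  simp only [mul_pow, Finset.mul_sum, mul_comm]

lemma IsSOS.smul {c : ℝ} (hc : 0 ≤ c) (hp : IsSOS d p) : IsSOS d (c • p) := by
  have hC : (C (√c) : MvPolynomial (Fin n) ℝ).totalDegree ≤ 0 := (totalDegree_C _).le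
  simpa [← map_pow, Real.sq_sqrt hc, ← smul_eq_C_mul] using hp.sq_mul hC

lemma IsSOS.nsmul (m : ℕ) (hp : IsSOS d p) : IsSOS d (m • p) := by
  simpa [Nat.cast_smul_eq_nsmul] using hp.smul (m.cast_nonneg (α := ℝ))

lemma IsSOS.of_nsmul {m : ℕ} (hm : m ≠ 0) (hp : IsSOS d (m • p)) : IsSOS d p := by
  have := hp.smul (inv_nonneg.mpr (m.cast_nonneg (α := ℝ)))
  rwa [← Nat.cast_smul_eq_nsmul ℝ, inv_smul_smul₀ (Nat.cast_ne_zero.mpr hm)] at this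

lemma IsSOS.totalDegree_le (hp : IsSOS d p) : p.totalDegree ≤ 2 * d := by
  obtain ⟨k, g, hg, rfl⟩ := hp
  exact totalDegree_finsetSum_le fun i _ =>
    (totalDegree_pow _ _).trans (Nat.mul_le_mul_left 2 (hg i))

end SosCone

section Closedness

lemma sum_sq_sum_smul {κ ι R A : Type*} [Fintype κ] [Fintype ι] [CommSemiring R]
    [Semiring A] [Algebra R A] (M : Matrix κ ι R) (v : ι → A) :
    ∑ k, (∑ i, M k i • v i) ^ 2 = ∑ i, ∑ j, (M.transpose * M) i j • (v i * v j) := by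
  simp only [sq, Finset.sum_mul_sum, smul_mul_smul_comm, Matrix.mul_apply, Finset.sum_smul]
  rw [Finset.sum_comm]
  refine Finset.sum_congr rfl fun i _ => ?_
  rw [Finset.sum_comm]
  rfl

open scoped MatrixOrder ComplexOrder in
lemma exists_square_conjTranspose_mul_self_eq {κ ι 𝕜 : Type*} [Fintype κ] [Fintype ι]
    [RCLike 𝕜] (M : Matrix κ ι 𝕜) :
    ∃ D : Matrix ι ι 𝕜, D.conjTranspose * D = M.conjTranspose * M := by
  classical
  obtain ⟨D, hD⟩ := CStarAlgebra.nonneg_iff_eq_star_mul_self.mp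
    (Matrix.posSemidef_conjTranspose_mul_self M).nonneg
  exact ⟨D, hD.symm⟩

variable {n d : ℕ} {ι : Type*} [Fintype ι]

/-- The sum of the squares of the polynomials whose coordinate vectors in the basis `b` are the
rows of `D`. Rows are functions, so that `ι → ι → ℝ` carries its (sup) norm. -/
noncomputable def sosOfRows (b : Module.Basis ι ℝ (restrictTotalDegree (Fin n) ℝ d))
    (D : ι → ι → ℝ) : MvPolynomial (Fin n) ℝ :=
  ∑ i, (∑ j, D i j • (b j : MvPolynomial (Fin n) ℝ)) ^ 2

variable (b : Module.Basis ι ℝ (restrictTotalDegree (Fin n) ℝ d))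

-- The Gram matrix of an arbitrary number of squares factors through a square matrix.
lemma isSOS_iff_exists_sosOfRows {p : MvPolynomial (Fin n) ℝ} :
    IsSOS d p ↔ ∃ D, p = sosOfRows b D := by
  have coe_sum (c : ι → ℝ) : ((∑ j, c j • b j : restrictTotalDegree (Fin n) ℝ d) :
      MvPolynomial (Fin n) ℝ) = ∑ j, c j • (b j : MvPolynomial (Fin n) ℝ) := by
    simp
  constructor
  · rintro ⟨k, g, hg, rfl⟩
    let M : Matrix (Fin k) ι ℝ := fun i =>
      b.equivFun ⟨g i, (mem_restrictTotalDegree _ _ _).mpr (hg i)⟩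
    have hM (i : Fin k) : g i = ∑ j, M i j • (b j : MvPolynomial (Fin n) ℝ) := by
      rw [← coe_sum, b.sum_equivFun]
    obtain ⟨D, hD⟩ := exists_square_conjTranspose_mul_self_eq M
    simp only [Matrix.conjTranspose_eq_transpose_of_trivial] at hD
    refine ⟨D, ?_⟩
    simp_rw [hM]
    exact (sum_sq_sum_smul M _).trans (hD ▸ (sum_sq_sum_smul D _).symm)
  · rintro ⟨D, rfl⟩
    refine IsSOS.sum fun i _ => IsSOS.sq ?_
    rw [← coe_sum, ← mem_restrictTotalDegree]
    exact Subtype.property _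

lemma sosOfRows_smul (c : ℝ) (D : ι → ι → ℝ) : sosOfRows b (c • D) = c ^ 2 • sosOfRows b D := by
  simp [sosOfRows, mul_smul, ← Finset.smul_sum, smul_pow]

lemma eq_zero_of_sosOfRows_eq_zero {D : ι → ι → ℝ} (h : sosOfRows b D = 0) : D = 0 := by
  have hrow (i : ι) : ∑ j, D i j • (b j : MvPolynomial (Fin n) ℝ) = 0 := by
    refine MvPolynomial.funext fun x => ?_
    have hx := congrArg (eval x) h
    simp only [sosOfRows, map_sum, map_pow, map_zero] at hx
    simpa using (Finset.sum_eq_zero_iff_of_nonneg fun i _ => by positivity).mp hx i (mem_univ i)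
  funext i j
  exact Fintype.linearIndependent_iff.mp b.linearIndependent (D i)
    (Subtype.ext (by simpa using hrow i)) j

lemma continuous_coeff_sosOfRows :
    Continuous fun (D : ι → ι → ℝ) α => (sosOfRows b D).coeff α := by
  refine continuous_pi fun α => ?_
  simp only [sosOfRows, sq, Finset.sum_mul_sum, smul_mul_smul_comm, coeff_sum, coeff_smul]
  fun_prop

lemma isClosed_setOf_isSOS {T : Type*} [TopologicalSpace T] {p : T → MvPolynomial (Fin n) ℝ}
    (hp : ∀ α, Continuous fun t => (p t).coeff α) : IsClosed {t | IsSOS d (p t)} := by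
  let b := Module.finBasis ℝ (restrictTotalDegree (Fin n) ℝ d)
  have hproper : IsProperMap fun D α => (sosOfRows b D).coeff α := by
    refine isProperMap_of_homogeneous two_ne_zero (continuous_coeff_sosOfRows b)
      (fun c D => ?_) fun D hD => ?_
    · funext α
      simp [sosOfRows_smul]
    · exact eq_zero_of_sosOfRows_eq_zero b (MvPolynomial.ext _ _ (congrFun hD))
  have hset : {t | IsSOS d (p t)} =
      (fun t α => (p t).coeff α) ⁻¹' Set.range fun D α => (sosOfRows b D).coeff α := by
    ext t
    simp [isSOS_iff_exists_sosOfRows b, MvPolynomial.ext_iff, funext_iff, eq_comm]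
  rw [hset]
  exact hproper.isClosedMap.isClosed_range.preimage (continuous_pi hp)

end Closedness

section ArithmeticGeometricMean

variable {n e : ℕ} {u v : MvPolynomial (Fin n) ℝ}

lemma isSOS_sub_mul_pow_sub_pow (hu : u.totalDegree ≤ e) (hv : v.totalDegree ≤ e) (m : ℕ) :
    IsSOS ((m + 1) * e) ((u ^ 2 - v ^ 2) * (u ^ (2 * m) - v ^ (2 * m))) := by
  induction m with
  | zero => simpa using IsSOS.zero
  | succ m ih =>
    have hdeg : ((u ^ 2 - v ^ 2) * v ^ m).totalDegree ≤ (m + 1) * e + e := by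
      have hsub : (u ^ 2 - v ^ 2).totalDegree ≤ 2 * e :=
        (totalDegree_sub _ _).trans (max_le
          ((totalDegree_pow _ _).trans (by gcongr)) ((totalDegree_pow _ _).trans (by gcongr)))
      have hpow : (v ^ m).totalDegree ≤ m * e := (totalDegree_pow _ _).trans (by gcongr)
      exact (totalDegree_mul _ _).trans (by linarith)
    convert (ih.sq_mul hu).add (IsSOS.sq hdeg) using 1 <;> ring

-- For `a = u ^ 2`, `b = v ^ 2` this is `b ^ (l + 1)` times the tangent-line bound
-- `a ^ k - b ^ k ≤ k * a ^ (k - 1) * (a - b)`, with the right-hand side made homogeneous by `a`.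
lemma isSOS_nsmul_pow_mul_sub_sub (hu : u.totalDegree ≤ e) (hv : v.totalDegree ≤ e) (k l : ℕ) :
    IsSOS ((k + l + 1) * e) (k • (u ^ (2 * (k + l)) * (u ^ 2 - v ^ 2))
      - v ^ (2 * (l + 1)) * (u ^ (2 * k) - v ^ (2 * k))) := by
  induction k with
  | zero => simpa using IsSOS.zero
  | succ k ih =>
    have hstep := isSOS_sub_mul_pow_sub_pow hu hv (k + l + 1)
    rw [add_one_mul] at hstep
    convert (ih.sq_mul hu).add hstep using 1
    · ring
    · simp only [nsmul_eq_mul]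
      push_cast
      ring

lemma isSOS_weighted_amgm_two (hu : u.totalDegree ≤ e) (hv : v.totalDegree ≤ e) (k l : ℕ) :
    IsSOS ((k + l) * e) (k • u ^ (2 * (k + l)) + l • v ^ (2 * (k + l))
      - (k + l) • (u ^ (2 * k) * v ^ (2 * l))) := by
  induction l with
  | zero => simpa using IsSOS.zero
  | succ l ih =>
    have hstep := isSOS_nsmul_pow_mul_sub_sub hu hv k l
    rw [add_one_mul] at hstep
    convert (ih.sq_mul hv).add hstep using 1
    · ring
    · simp only [nsmul_eq_mul]
      push_cast
      ring

theorem isSOS_weighted_amgm {ι : Type*} (s : Finset ι) {u : ι → MvPolynomial (Fin n) ℝ}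
    (hu : ∀ i ∈ s, (u i).totalDegree ≤ e) (β : ι → ℕ) :
    IsSOS ((∑ i ∈ s, β i) * e) (∑ i ∈ s, β i • u i ^ (2 * ∑ j ∈ s, β j)
      - (∑ i ∈ s, β i) • ∏ i ∈ s, u i ^ (2 * β i)) := by
  classical
  induction s using Finset.induction_on with
  | empty => simpa using IsSOS.zero
  | insert a s ha ih =>
    have ih := ih fun i hi => hu i (mem_insert_of_mem hi)
    have hua := hu a (mem_insert_self a s)
    rw [Finset.sum_insert ha, Finset.sum_insert ha, Finset.prod_insert ha, add_comm (β a)]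
    generalize hD : ∑ i ∈ s, β i = D at ih ⊢
    rcases eq_or_ne D 0 with rfl | hD0
    · have hβ : ∀ i ∈ s, β i = 0 := Finset.sum_eq_zero_iff.mp hD
      rw [Finset.sum_eq_zero fun i hi => by simp [hβ i hi],
        Finset.prod_eq_one fun i hi => by simp [hβ i hi]]
      simpa using IsSOS.zero
    have hpow : (u a ^ β a).totalDegree ≤ β a * e := (totalDegree_pow _ _).trans (by gcongr)
    have hprod := (ih.sq_mul hpow).nsmul (D + β a)
    have hpairs : IsSOS ((D + β a) * e) _ := IsSOS.sum fun i hi =>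
      (isSOS_weighted_amgm_two (hu i (mem_insert_of_mem hi)) hua D (β a)).nsmul (β i)
    rw [← add_mul] at hprod
    -- `D` times the new inequality is the induction hypothesis, multiplied by
    -- `(D + β a) * u a ^ (2 * β a)`, plus the two-term inequalities for the pairs `u i, u a`.
    refine IsSOS.of_nsmul hD0 ?_
    convert hprod.add hpairs using 1
    have hsum : ∑ i ∈ s, β i • (D • u i ^ (2 * (D + β a)) + β a • u a ^ (2 * (D + β a))
          - (D + β a) • (u i ^ (2 * D) * u a ^ (2 * β a)))
        = D • ∑ i ∈ s, β i • u i ^ (2 * (D + β a)) + D • β a • u a ^ (2 * (D + β a))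
          - (D + β a) • ((∑ i ∈ s, β i • u i ^ (2 * D)) * u a ^ (2 * β a)) := by
      simp only [smul_sub, smul_add, Finset.sum_sub_distrib, Finset.sum_add_distrib,
        ← Finset.sum_smul, hD, smul_comm (β _) (D + β a), smul_comm (β _) D, ← Finset.smul_sum,
        Finset.sum_mul, smul_mul_assoc]
    rw [hsum]
    simp only [nsmul_eq_mul]
    push_cast
    ring

end ArithmeticGeometricMean

section SosShift

/-- The affine coordinates `1, x₁, …, xₙ`. -/
noncomputable def affineCoord (n : ℕ) : Fin (n + 1) → MvPolynomial (Fin n) ℝ :=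
  Fin.cons 1 X

variable {n : ℕ}

lemma totalDegree_affineCoord_le (i : Fin (n + 1)) : (affineCoord n i).totalDegree ≤ 1 := by
  cases i using Fin.cases <;> simp [affineCoord]

lemma l1Norm_affineCoord_pow (i : Fin (n + 1)) (k : ℕ) : l1Norm (affineCoord n i ^ k) = 1 := by
  cases i using Fin.cases with
  | zero => simpa [affineCoord] using l1Norm_monomial (0 : Fin n →₀ ℕ) 1
  | succ i => simp [affineCoord, X_pow_eq_monomial, l1Norm_monomial]

/-- The perturbation `λ₀ + ∑ᵢ λᵢ xᵢ^{2d}` attached to the coefficients `λ`. -/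
noncomputable def sosShift (n d : ℕ) : (Fin (n + 1) → ℝ) →ₗ[ℝ] MvPolynomial (Fin n) ℝ :=
  Fintype.linearCombination ℝ fun i => affineCoord n i ^ (2 * d)

variable {d : ℕ} {p q : MvPolynomial (Fin n) ℝ} {r s : ℝ}

lemma sosShift_eq (l : Fin (n + 1) → ℝ) :
    sosShift n d l = C (l 0) + ∑ i : Fin n, C (l i.succ) * X i ^ (2 * d) := by
  simp [sosShift, Fintype.linearCombination_apply, affineCoord, Fin.sum_univ_succ, smul_eq_C_mul]

lemma l1Norm_sosShift_le {l : Fin (n + 1) → ℝ} (hl : 0 ≤ l) :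
    l1Norm (sosShift n d l) ≤ ∑ i, l i := by
  refine (l1Norm_sum_le _ _).trans_eq (Finset.sum_congr rfl fun i _ => ?_)
  simp [l1Norm_smul, l1Norm_affineCoord_pow, abs_of_nonneg (hl i)]

/-- `HasSOSShift d p r`: a perturbation `λ₀ + ∑ᵢ λᵢ xᵢ^{2d}` with `λ ≥ 0` of total weight
`∑ᵢ λᵢ = r` turns `p` into a sum of squares of polynomials of degree at most `d`. -/
def HasSOSShift (d : ℕ) (p : MvPolynomial (Fin n) ℝ) (r : ℝ) : Prop :=
  ∃ l : Fin (n + 1) → ℝ, 0 ≤ l ∧ IsSOS d (p + sosShift n d l) ∧ ∑ i, l i = r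

lemma IsSOS.hasSOSShift (hp : IsSOS d p) : HasSOSShift d p 0 :=
  ⟨0, le_rfl, by simpa using hp, by simp⟩

lemma HasSOSShift.add (hp : HasSOSShift d p r) (hq : HasSOSShift d q s) :
    HasSOSShift d (p + q) (r + s) := by
  obtain ⟨l, hl, hpl, rfl⟩ := hp
  obtain ⟨m, hm, hqm, rfl⟩ := hq
  refine ⟨l + m, add_nonneg hl hm, ?_, Finset.sum_add_distrib⟩
  rw [map_add, add_add_add_comm]
  exact hpl.add hqm

lemma HasSOSShift.smul {c : ℝ} (hc : 0 ≤ c) (hp : HasSOSShift d p r) :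
    HasSOSShift d (c • p) (c * r) := by
  obtain ⟨l, hl, hpl, rfl⟩ := hp
  refine ⟨c • l, smul_nonneg hc hl, ?_, by simp [Finset.mul_sum]⟩
  rw [map_smul, ← smul_add]
  exact hpl.smul hc

lemma HasSOSShift.sum {ι : Type*} {s : Finset ι} {p : ι → MvPolynomial (Fin n) ℝ} {r : ι → ℝ}
    (h : ∀ i ∈ s, HasSOSShift d (p i) (r i)) :
    HasSOSShift d (∑ i ∈ s, p i) (∑ i ∈ s, r i) := by
  simpa [Prod.fst_sum, Prod.snd_sum] using
    Finset.sum_induction (fun i => (p i, r i)) (fun x => HasSOSShift d x.1 x.2)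
      (fun _ _ => HasSOSShift.add) IsSOS.zero.hasSOSShift h

-- The weights are those of the AM–GM inequality `x^{2β} ≤ (1 - |β| / d) + ∑ᵢ (βᵢ / d) xᵢ^{2d}`.
lemma hasSOSShift_neg_monomial_sq {β : Fin n →₀ ℕ} (hβ : β.degree ≤ d) :
    HasSOSShift d (-(monomial β (1 : ℝ)) ^ 2) 1 := by
  rcases eq_or_ne d 0 with rfl | hd
  · obtain rfl : β = 0 := (Finsupp.degree_eq_zero_iff β).mp (Nat.le_zero.mp hβ)
    refine ⟨Pi.single 0 1, Pi.single_nonneg.mpr zero_le_one, ?_, by simp⟩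
    simpa [sosShift] using IsSOS.zero
  let γ : Fin (n + 1) → ℕ := Fin.cons (d - β.degree) β
  have hγ : ∑ i, γ i = d := by
    simp [γ, Fin.sum_univ_succ, ← Finsupp.degree_eq_sum, hβ]
  have hprod : ∏ i, affineCoord n i ^ (2 * γ i) = monomial β (1 : ℝ) ^ 2 := by
    rw [monomial_eq, Finsupp.prod_fintype _ _ fun _ => pow_zero _]
    simp [γ, affineCoord, Fin.prod_univ_succ, mul_comm 2, pow_mul, Finset.prod_pow]
  have hamgm := isSOS_weighted_amgm univ (fun i _ => totalDegree_affineCoord_le i) γ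
  rw [hγ, hprod, mul_one] at hamgm
  refine ⟨fun i => (d : ℝ)⁻¹ * γ i, fun i => by positivity, IsSOS.of_nsmul hd ?_, ?_⟩
  · have hshift : d • sosShift n d (fun i => (d : ℝ)⁻¹ * γ i)
        = ∑ i, γ i • affineCoord n i ^ (2 * d) := by
      simp only [sosShift, Fintype.linearCombination_apply, Finset.smul_sum, mul_smul,
        ← Nat.cast_smul_eq_nsmul ℝ, smul_inv_smul₀ (Nat.cast_ne_zero.mpr hd : (d : ℝ) ≠ 0)]
    rwa [smul_add, hshift, smul_neg, neg_add_eq_sub]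
  · rw [← Finset.mul_sum, ← Nat.cast_sum, hγ, inv_mul_cancel₀ (Nat.cast_ne_zero.mpr hd)]

lemma exists_add_eq_of_degree_le_add {σ : Type*} {α : σ →₀ ℕ} {k l : ℕ}
    (hα : α.degree ≤ k + l) : ∃ β γ : σ →₀ ℕ, β + γ = α ∧ β.degree ≤ k ∧ γ.degree ≤ l := by
  obtain ⟨β, hβα, hβ⟩ := Finsupp.exists_le_degree_eq α (min α.degree k) (min_le_left _ _)
  obtain ⟨γ, rfl⟩ := exists_add_of_le hβα
  refine ⟨β, γ, rfl, hβ.trans_le (min_le_right _ _), ?_⟩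
  rw [map_add] at hα hβ
  omega

lemma hasSOSShift_monomial {α : Fin n →₀ ℕ} (hα : α.degree ≤ 2 * d) (c : ℝ) :
    HasSOSShift d (monomial α c) |c| := by
  obtain ⟨β, γ, rfl, hβ, hγ⟩ := exists_add_eq_of_degree_le_add (hα.trans_eq (two_mul d))
  obtain ⟨ε, hε, hcε⟩ : ∃ ε : ℝ, ε ^ 2 = 1 ∧ |c| * ε = c := by
    rcases abs_choice c with h | h
    · exact ⟨1, by simp, by simp [h]⟩
    · exact ⟨-1, by simp, by simp [h]⟩
  have hsq : IsSOS d ((monomial β (1 : ℝ) + ε • monomial γ (1 : ℝ)) ^ 2) :=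
    IsSOS.sq ((totalDegree_add _ _).trans (max_le ((totalDegree_monomial_le _ _).trans hβ)
      ((totalDegree_smul_le _ _).trans ((totalDegree_monomial_le _ _).trans hγ))))
  have hshift := ((hsq.hasSOSShift.add (hasSOSShift_neg_monomial_sq hβ)).add
    (hasSOSShift_neg_monomial_sq hγ)).smul (c := |c| / 2) (by positivity)
  convert hshift using 1
  · have hmul : (monomial (β + γ) c : MvPolynomial (Fin n) ℝ)
        = C c * (monomial β 1 * monomial γ 1) := by
      simp [monomial_mul, C_mul_monomial]
    have hC : C (|c| / 2) * 2 * C ε = (C c : MvPolynomial (Fin n) ℝ) := by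
      rw [← map_ofNat C 2, ← C_mul, ← C_mul, div_mul_cancel₀ _ two_ne_zero, hcε]
    have hCε : C ε ^ 2 = (1 : MvPolynomial (Fin n) ℝ) := by rw [← C_pow, hε, C_1]
    simp only [smul_eq_C_mul]
    linear_combination hmul - (monomial β (1 : ℝ) * monomial γ 1) * hC
      - C (|c| / 2) * monomial γ 1 ^ 2 * hCε
  · ring

lemma hasSOSShift_l1Norm (hp : p.totalDegree ≤ 2 * d) : HasSOSShift d p (l1Norm p) := by
  nth_rw 1 [p.as_sum]
  exact HasSOSShift.sum fun α hα => hasSOSShift_monomial ((le_totalDegree hα).trans hp) _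

lemma exists_isLeast_hasSOSShift (h : ∃ r, HasSOSShift d p r) :
    ∃ r, IsLeast {r | HasSOSShift d p r} r := by
  obtain ⟨_, l₀, hl₀, hpl₀, -⟩ := h
  have hclosed : IsClosed {l : Fin (n + 1) → ℝ | 0 ≤ l ∧ IsSOS d (p + sosShift n d l)} := by
    refine isClosed_Ici.inter (isClosed_setOf_isSOS fun α => ?_)
    simp only [sosShift, Fintype.linearCombination_apply, coeff_add, coeff_sum, coeff_smul]
    fun_prop
  have norm_le_sum {l : Fin (n + 1) → ℝ} (hl : 0 ≤ l) : ‖l‖ ≤ ∑ i, l i := by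
    refine (pi_norm_le_iff_of_nonneg (Finset.sum_nonneg fun i _ => hl i)).mpr fun i => ?_
    rw [Real.norm_of_nonneg (hl i)]
    exact Finset.single_le_sum (fun j _ => hl j) (mem_univ i)
  have hcoercive : ∀ᶠ l in cocompact (Fin (n + 1) → ℝ) ⊓
      𝓟 {l | 0 ≤ l ∧ IsSOS d (p + sosShift n d l)}, ∑ i, l₀ i ≤ ∑ i, l i := by
    rw [eventually_inf_principal]
    filter_upwards [tendsto_norm_cocompact_atTop.eventually_ge_atTop (∑ i, l₀ i)] with l hl hl'
    exact hl.trans (norm_le_sum hl'.1)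
  obtain ⟨l, ⟨hl, hpl⟩, hmin⟩ := ContinuousOn.exists_isMinOn' (by fun_prop) hclosed
    ⟨hl₀, hpl₀⟩ hcoercive
  refine ⟨∑ i, l i, ⟨l, hl, hpl, rfl⟩, ?_⟩
  rintro _ ⟨m, hm, hpm, rfl⟩
  exact hmin ⟨hm, hpm⟩

end SosShift

section Distance

variable {n d : ℕ} {f : MvPolynomial (Fin n) ℝ}

lemma rho_le_l1Norm_sub {g : MvPolynomial (Fin n) ℝ} (hg : IsSOS d g) :
    rho d f ≤ l1Norm (f - g) :=
  csInf_le ⟨0, by rintro _ ⟨g, -, rfl⟩; exact l1Norm_nonneg _⟩ ⟨g, hg, rfl⟩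

lemma HasSOSShift.rho_le {r : ℝ} (h : HasSOSShift d f r) : rho d f ≤ r := by
  obtain ⟨l, hl, hfl, rfl⟩ := h
  calc rho d f ≤ l1Norm (f - (f + sosShift n d l)) := rho_le_l1Norm_sub hfl
    _ = l1Norm (sosShift n d l) := by rw [sub_add_cancel_left, l1Norm_neg]
    _ ≤ ∑ i, l i := l1Norm_sosShift_le hl

lemma hasSOSShift_l1Norm_sub (hf : f.totalDegree ≤ 2 * d) {g : MvPolynomial (Fin n) ℝ}
    (hg : IsSOS d g) : HasSOSShift d f (l1Norm (f - g)) := by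
  have hdeg : (f - g).totalDegree ≤ 2 * d :=
    (totalDegree_sub _ _).trans (max_le hf hg.totalDegree_le)
  simpa using (hasSOSShift_l1Norm hdeg).add hg.hasSOSShift

theorem isLeast_rho (hf : f.totalDegree ≤ 2 * d) :
    IsLeast {r | HasSOSShift d f r} (rho d f) := by
  obtain ⟨r, hr, hmin⟩ := exists_isLeast_hasSOSShift ⟨_, hasSOSShift_l1Norm hf⟩
  have hle : r ≤ rho d f := by
    refine le_csInf ⟨_, 0, IsSOS.zero, rfl⟩ ?_
    rintro _ ⟨g, hg, rfl⟩
    exact hmin (hasSOSShift_l1Norm_sub hf hg)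
  exact le_antisymm (HasSOSShift.rho_le hr) hle ▸ ⟨hr, hmin⟩

end Distance

/-- `ρ_d(f)` equals the minimum of `∑ᵢ lᵢ` over all nonnegative `l ∈ ℝ₊^{n+1}` with
`f + l₀ + ∑ᵢ lᵢ xᵢ^{2d} ∈ Σ[x]_d`, and this minimum is attained. -/
theorem rho_eq_min_sos_shift {n d : ℕ} (f : MvPolynomial (Fin n) ℝ)
    (hf : f.totalDegree ≤ 2 * d) :
    ∃ l : Fin (n + 1) → ℝ, (∀ i, 0 ≤ l i) ∧
      IsSOS d (f + C (l 0) + ∑ i : Fin n, C (l i.succ) * X i ^ (2 * d)) ∧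
      rho d f = ∑ i, l i ∧
      ∀ m : Fin (n + 1) → ℝ, (∀ i, 0 ≤ m i) →
        IsSOS d (f + C (m 0) + ∑ i : Fin n, C (m i.succ) * X i ^ (2 * d)) →
        ∑ i, l i ≤ ∑ i, m i := by
  simp_rw [add_assoc, ← sosShift_eq]
  obtain ⟨⟨l, hl, hfl, hsum⟩, hmin⟩ := isLeast_rho hf
  refine ⟨l, hl, hfl, hsum.symm, fun m hm hfm => ?_⟩
  exact hsum.trans_le (hmin ⟨m, hm, hfm, rfl⟩)
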